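/- Let M be a commutative idempotent monoid generated by X₁,…,X_n, G an abelian group, and . : M × G → G an additive monoid action. Suppose μ : 2^{X̃} → G is a G-valued measure and F_q : M^q → G (q ≥ 1) is a sequence of functions satisfying X_J.F_q(X_{L₁};…;X_{L_q}) = μ(⋂_{k=1}^q X̃_{L_k} \ X̃_J) for all q ≥ 1 and all J, L₁,…,L_q ⊆ [n]. Then F₁ satisfies the chain rule F₁(XY) = F₁(X) + X.F₁(Y) for all X, Y ∈ M, and F_q(Y₁;…;Y_q) = F_{q−1}(Y₁;…;Y_{q−1}) − Y_q.F_{q−1}(Y₁;…;Y_{q−1}) for all q ≥ 2 and all Y₁,…,Y_q ∈ M. -/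

import Mathlib

/-! In a commutative idempotent monoid `X_I * X_J = X_{I ∪ J}`, and circles turn unions of index
sets into unions of sets of atoms. Hu's identity with `J = ∅` gives `F_q = μ (⋂ₖ X̃_{L_k})`, so the
chain rule is additivity of `μ` along `X̃_I ∪ X̃_J = X̃_I ⊔ (X̃_J \ X̃_I)`, and the inductive formula is
additivity along `A = (A ∩ X̃_L) ⊔ (A \ X̃_L)`. -/

open scoped Classical

noncomputable section

universe u v

/-- The set `X̃(n)` of abstract atoms `p_I`, one for each nonempty `I ⊆ [n]`. -/
def Atom (n : ℕ) : Type :=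
  {I : Finset (Fin n) // I.Nonempty}

/-- `X̃_L = ⋃_{i ∈ L} X̃_i`, the union of the circles of the variables in `L`. -/
def circlesOf {n : ℕ} (L : Finset (Fin n)) : Set (Atom n) :=
  {p | ∃ i ∈ L, i ∈ p.1}

theorem prod_mul_prod_of_idem {M : Type u} [CommMonoid M] {n : ℕ} (X : Fin n → M)
    (hidem : ∀ m : M, m * m = m) (I J : Finset (Fin n)) :
    (∏ i ∈ I, X i) * ∏ i ∈ J, X i = ∏ i ∈ I ∪ J, X i := by
  rw [← Finset.prod_union_inter]
  have h : I ∩ J ⊆ I ∪ J := fun x hx => by simp at hx ⊢; tauto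
  rw [← Finset.prod_sdiff h, mul_assoc, hidem]

theorem circlesOf_empty {n : ℕ} : circlesOf (∅ : Finset (Fin n)) = ∅ := by
  ext p; simp [circlesOf]

theorem circlesOf_union {n : ℕ} (I J : Finset (Fin n)) :
    circlesOf (I ∪ J) = circlesOf I ∪ circlesOf J := by
  ext p; simp [circlesOf, or_and_right, exists_or]

/-- Converse part of the generalized Hu theorem: if a sequence of functions
`F_q : M^q → G` (here `F (q+1)` represents `F_{q+1}`... indexed so that `F q`
takes `q` arguments) satisfies Hu's identity with respect to a `G`-valued
measure `μ`, then `F₁` satisfies the chain rule and `F_q` is built from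
`F_{q−1}` by the inductive formula. -/
theorem stmt12 {M : Type u} {G : Type v} [CommMonoid M] [AddCommGroup G]
    {n : ℕ} (X : Fin n → M)
    (hidem : ∀ m : M, m * m = m)
    (hgen : ∀ m : M, ∃ I : Finset (Fin n), m = ∏ i ∈ I, X i)
    (act : M → G → G)
    (hact_one : ∀ g : G, act 1 g = g)
    (hact_mul : ∀ (a b : M) (g : G), act a (act b g) = act (a * b) g)
    (hact_add : ∀ (a : M) (g h : G), act a (g + h) = act a g + act a h)
    (μ : Set (Atom n) → G)
    (hμ : ∀ A B : Set (Atom n), Disjoint A B → μ (A ∪ B) = μ A + μ B)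
    (F : (q : ℕ) → (Fin q → M) → G)
    (hHu : ∀ q : ℕ, 1 ≤ q → ∀ (L : Fin q → Finset (Fin n)) (J : Finset (Fin n)),
      act (∏ i ∈ J, X i) (F q fun k => ∏ i ∈ L k, X i)
        = μ ((⋂ k, circlesOf (L k)) \ circlesOf J)) :
    (∀ a b : M,
      F 1 (fun _ => a * b) = F 1 (fun _ => a) + act a (F 1 fun _ => b)) ∧
    (∀ q : ℕ, 1 ≤ q → ∀ Y : Fin (q + 1) → M,
      F (q + 1) Y
        = F q (fun i => Y i.castSucc)
            - act (Y (Fin.last q)) (F q fun i => Y i.castSucc)) := by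
  have hF : ∀ q : ℕ, 1 ≤ q → ∀ L : Fin q → Finset (Fin n),
      (F q fun k => ∏ i ∈ L k, X i) = μ (⋂ k, circlesOf (L k)) := by
    intro q hq L
    have h := hHu q hq L ∅
    rwa [Finset.prod_empty, hact_one, circlesOf_empty, Set.sdiff_empty] at h
  refine ⟨fun a b => ?_, fun q hq Y => ?_⟩
  · obtain ⟨I, rfl⟩ := hgen a
    obtain ⟨J, rfl⟩ := hgen b
    rw [prod_mul_prod_of_idem X hidem, hF 1 le_rfl fun _ => I ∪ J, hF 1 le_rfl fun _ => I,
      hHu 1 le_rfl (fun _ => J) I]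
    simp only [Set.iInter_const]
    rw [← hμ _ _ Set.disjoint_sdiff_right, Set.union_sdiff_self, circlesOf_union]
  · choose L hL using fun k => hgen (Y k)
    obtain rfl : Y = fun k => ∏ i ∈ L k, X i := funext hL
    beta_reduce
    rw [hHu q hq (fun k => L k.castSucc) (L (Fin.last q)), hF (q + 1) (by omega) L,
      hF q hq fun k => L k.castSucc, eq_sub_iff_add_eq]
    have hsplit : (⋂ k, circlesOf (L k))
        = (⋂ k : Fin q, circlesOf (L k.castSucc)) ∩ circlesOf (L (Fin.last q)) := by
      ext p
      simp [Fin.forall_fin_succ']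
    rw [hsplit, ← hμ _ _ Set.disjoint_sdiff_inter.symm, Set.inter_union_sdiff]
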